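/- arXiv:1403.4371 — 8 statements merged into one kernel-verified Lean document; each statement's English description precedes it below -/
import Mathlib

section
/- Let ξ ∈ ℂ be a primitive n-th root of unity and g = (ξ, ξ, ξ^{-1}, ξ^{-1}) ∈ (ℂ*)^4. For any v, v' ∈ (ℂ*)^4, one has p_n(v) = p_n(v') if and only if v' = g^k · v (componentwise multiplication) for some integer k with 0 ≤ k ≤ n−1. In other words, the fibers of p_n are exactly the orbits of the ℤ/nℤ-action generated by translation by g. -/
/-- The group `(ℂ*)^4` of quadruples of nonzero complex numbers under
componentwise multiplication. -/
abbrev TorusFour : Type := ℂˣ × ℂˣ × ℂˣ × ℂˣ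

/-- The map `p_n(w, x, y, z) = (wⁿ, w/x, w·y, w·z)`. -/
def pUnits (n : ℕ) (v : TorusFour) : TorusFour :=
  (v.1 ^ n, v.1 / v.2.1, v.1 * v.2.2.1, v.1 * v.2.2.2)

/-- Let `ξ ∈ ℂ` be a primitive `n`-th root of unity and
`g = (ξ, ξ, ξ⁻¹, ξ⁻¹) ∈ (ℂ*)^4`. For any `v, v' ∈ (ℂ*)^4` one has
`p_n(v) = p_n(v')` if and only if `v' = gᵏ · v` for some integer `k` with
`0 ≤ k ≤ n - 1`: the fibers of `p_n` are exactly the orbits of the `ℤ/nℤ`-action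
generated by translation by `g`. -/
theorem pUnits_fibers_eq_orbits (n : ℕ) (hn : 1 ≤ n) (ξ : ℂˣ)
    (hξ : IsPrimitiveRoot (ξ : ℂ) n) (v v' : TorusFour) :
    pUnits n v = pUnits n v' ↔
      ∃ k : ℕ, k ≤ n - 1 ∧ v' = ((ξ, ξ, ξ⁻¹, ξ⁻¹) : TorusFour) ^ k * v := by
  obtain ⟨w, x, y, z⟩ := v
  obtain ⟨w', x', y', z'⟩ := v'
  have hξn : ξ ^ n = 1 := by
    ext
    simpa using hξ.pow_eq_one
  simp only [pUnits, Prod.mk.injEq, Prod.pow_mk, Prod.mk_mul_mk]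
  constructor
  · rintro ⟨h1, h2, h3, h4⟩
    have hu : (((w' / w : ℂˣ)) : ℂ) ^ n = 1 := by
      rw [← Units.val_pow_eq_pow_val, div_pow, h1, div_self', Units.val_one]
    haveI : NeZero n := ⟨by omega⟩
    obtain ⟨k, hk, hk'⟩ := hξ.eq_pow_of_pow_eq_one hu
    have hw : w' = ξ ^ k * w := by
      have : ξ ^ k = w' / w := by
        ext
        rw [Units.val_pow_eq_pow_val, hk']
      rw [this, div_mul_cancel]
    subst hw
    refine ⟨k, by omega, rfl, ?_, ?_, ?_⟩
    · rw [div_eq_div_iff_mul_eq_mul] at h2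
      apply mul_left_cancel (a := w)
      rw [h2, mul_left_comm, mul_assoc]
    · apply mul_left_cancel (a := ξ ^ k * w)
      rw [← h3, inv_pow, mul_mul_mul_comm, mul_inv_cancel, one_mul]
    · apply mul_left_cancel (a := ξ ^ k * w)
      rw [← h4, inv_pow, mul_mul_mul_comm, mul_inv_cancel, one_mul]
  · rintro ⟨k, -, rfl, rfl, rfl, rfl⟩
    refine ⟨?_, ?_, ?_, ?_⟩
    · rw [mul_pow, ← pow_mul, mul_comm k, pow_mul, hξn, one_pow, one_mul]
    · rw [mul_div_mul_left_eq_div]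
    · rw [inv_pow, mul_mul_mul_comm, mul_inv_cancel, one_mul]
    · rw [inv_pow, mul_mul_mul_comm, mul_inv_cancel, one_mul]
end

section
/- Let n be an odd positive integer, ξ ∈ ℂ a primitive n-th root of unity, and 1 ≤ i ≤ n−1. Then the intersection U ∩ g^i·U consists of exactly one point, namely P_i = (ξ^i/(1+ξ^i), ξ^i/(1+ξ^i), 1/(1+ξ^i), 1/(1+ξ^i)). Here g^i·U denotes the translate {g^i · u : u ∈ U} under componentwise multiplication, which equals {(w, x, y, z) ∈ (ℂ*)^4 : ξ^{-i}w + ξ^i y = 1, ξ^{-i}x + ξ^i z = 1}. -/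
noncomputable section

/-- The surface `U = {(w,x,y,z) ∈ (ℂ*)^4 : w + y = 1, x + z = 1}`, as a set of
quadruples of (nonzero) complex numbers. -/
def U : Set (ℂ × ℂ × ℂ × ℂ) :=
  {p | p.1 ≠ 0 ∧ p.2.1 ≠ 0 ∧ p.2.2.1 ≠ 0 ∧ p.2.2.2 ≠ 0 ∧
    p.1 + p.2.2.1 = 1 ∧ p.2.1 + p.2.2.2 = 1}

/-- Translation of a subset of `(ℂ*)^4` by `(c, c, c⁻¹, c⁻¹)` under componentwise
multiplication; for `c = ξ^i` and `g = (ξ, ξ, ξ⁻¹, ξ⁻¹)` this is the gTranslate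
`g^i · S = {g^i · u : u ∈ S}`. -/
def gTranslate (c : ℂ) (S : Set (ℂ × ℂ × ℂ × ℂ)) : Set (ℂ × ℂ × ℂ × ℂ) :=
  (fun p => (c * p.1, c * p.2.1, c⁻¹ * p.2.2.1, c⁻¹ * p.2.2.2)) '' S

/-- The point `P_k = (ξ^k/(1+ξ^k), ξ^k/(1+ξ^k), 1/(1+ξ^k), 1/(1+ξ^k))`. -/
def P (ξ : ℂ) (k : ℕ) : ℂ × ℂ × ℂ × ℂ :=
  (ξ ^ k / (1 + ξ ^ k), ξ ^ k / (1 + ξ ^ k), 1 / (1 + ξ ^ k), 1 / (1 + ξ ^ k))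

/-- The map `p_n(w, x, y, z) = (wⁿ, w/x, w·y, w·z)`. -/
def pmap (n : ℕ) (p : ℂ × ℂ × ℂ × ℂ) : ℂ × ℂ × ℂ × ℂ :=
  (p.1 ^ n, p.1 / p.2.1, p.1 * p.2.2.1, p.1 * p.2.2.2)

/-- The algebra for one pair of coordinates. -/
theorem pair_solve {c w y : ℂ} (h0 : c ≠ 0) (h1 : c - 1 ≠ 0) (h2 : 1 + c ≠ 0)
    (ha : w + y = 1) (hb : c⁻¹ * w + c * y = 1) : w = c / (1 + c) ∧ y = 1 / (1 + c) := by
  have hb' : w + c * c * y = c := by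
    have := congrArg (fun t => c * t) hb
    simp only [mul_add, mul_inv_cancel_left₀ h0, mul_one] at this
    linear_combination this
  have hy : (1 + c) * y = 1 := by
    apply mul_left_cancel₀ h1
    linear_combination hb' - ha
  constructor
  · rw [eq_div_iff h2]
    linear_combination (1 + c) * ha - hy
  · rw [eq_div_iff h2]
    linear_combination hy

/-- Let `n` be an odd positive integer, `ξ` a primitive `n`-th root
of unity, and `1 ≤ i ≤ n - 1`. Then `U ∩ g^i·U` consists of exactly one point,
namely `P_i = (ξ^i/(1+ξ^i), ξ^i/(1+ξ^i), 1/(1+ξ^i), 1/(1+ξ^i))`; moreover the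
translate `g^i·U = {g^i · u : u ∈ U}` equals
`{(w,x,y,z) ∈ (ℂ*)^4 : ξ⁻ⁱw + ξⁱy = 1, ξ⁻ⁱx + ξⁱz = 1}`. -/
theorem inter_translate_eq_singleton (n : ℕ) (hpos : 0 < n) (hodd : Odd n) (ξ : ℂ)
    (hξ : IsPrimitiveRoot ξ n) (i : ℕ) (h1 : 1 ≤ i) (h2 : i ≤ n - 1) :
    U ∩ gTranslate (ξ ^ i) U = {P ξ i} ∧
    gTranslate (ξ ^ i) U =
      {p : ℂ × ℂ × ℂ × ℂ | p.1 ≠ 0 ∧ p.2.1 ≠ 0 ∧ p.2.2.1 ≠ 0 ∧ p.2.2.2 ≠ 0 ∧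
        (ξ ^ i)⁻¹ * p.1 + ξ ^ i * p.2.2.1 = 1 ∧
        (ξ ^ i)⁻¹ * p.2.1 + ξ ^ i * p.2.2.2 = 1} := by
  have hξ0 : ξ ≠ 0 := hξ.ne_zero hpos.ne'
  have h0 : ξ ^ i ≠ 0 := pow_ne_zero _ hξ0
  have hc1 : ξ ^ i ≠ 1 := hξ.pow_ne_one_of_pos_of_lt (by omega) (by omega)
  have hcn : (ξ ^ i) ^ n = 1 := by rw [← pow_mul, mul_comm, pow_mul, hξ.pow_eq_one, one_pow]
  have hs : 1 + ξ ^ i ≠ 0 := by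
    intro h
    have h' : ξ ^ i = -1 := by linear_combination h
    rw [h', hodd.neg_one_pow] at hcn
    norm_num at hcn
  have hT : gTranslate (ξ ^ i) U =
      {p : ℂ × ℂ × ℂ × ℂ | p.1 ≠ 0 ∧ p.2.1 ≠ 0 ∧ p.2.2.1 ≠ 0 ∧ p.2.2.2 ≠ 0 ∧
        (ξ ^ i)⁻¹ * p.1 + ξ ^ i * p.2.2.1 = 1 ∧
        (ξ ^ i)⁻¹ * p.2.1 + ξ ^ i * p.2.2.2 = 1} := by
    generalize ξ ^ i = c at h0
    ext ⟨w, x, y, z⟩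
    simp only [gTranslate, U, Set.mem_image, Set.mem_setOf_eq]
    constructor
    · rintro ⟨⟨w', x', y', z'⟩, ⟨hw, hx, hy, hz, e1, e2⟩, h⟩
      simp only [Prod.mk.injEq] at h hw hx hy hz e1 e2
      obtain ⟨rfl, rfl, rfl, rfl⟩ := h
      have hi := inv_ne_zero h0
      refine ⟨mul_ne_zero h0 hw, mul_ne_zero h0 hx, mul_ne_zero hi hy, mul_ne_zero hi hz, ?_, ?_⟩
      · rw [inv_mul_cancel_left₀ h0, mul_inv_cancel_left₀ h0, e1]
      · rw [inv_mul_cancel_left₀ h0, mul_inv_cancel_left₀ h0, e2]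
    · rintro ⟨hw, hx, hy, hz, e1, e2⟩
      have hi := inv_ne_zero h0
      refine ⟨(c⁻¹ * w, c⁻¹ * x, c * y, c * z), ⟨mul_ne_zero hi hw, mul_ne_zero hi hx,
        mul_ne_zero h0 hy, mul_ne_zero h0 hz, e1, e2⟩, ?_⟩
      simp only [inv_mul_cancel_left₀ h0, mul_inv_cancel_left₀ h0]
  refine ⟨?_, hT⟩
  rw [hT]
  unfold P
  generalize ξ ^ i = c at h0 hc1 hs
  ext ⟨w, x, y, z⟩
  simp only [U, Set.mem_inter_iff, Set.mem_setOf_eq, Set.mem_singleton_iff, Prod.mk.injEq]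
  constructor
  · rintro ⟨⟨-, -, -, -, a1, a2⟩, -, -, -, -, b1, b2⟩
    obtain ⟨r1, r3⟩ := pair_solve h0 (sub_ne_zero.mpr hc1) hs a1 b1
    obtain ⟨r2, r4⟩ := pair_solve h0 (sub_ne_zero.mpr hc1) hs a2 b2
    exact ⟨r1, r2, r3, r4⟩
  · rintro ⟨rfl, rfl, rfl, rfl⟩
    have n1 : c / (1 + c) ≠ 0 := div_ne_zero h0 hs
    have n2 : 1 / (1 + c) ≠ 0 := div_ne_zero one_ne_zero hs
    have e1 : c / (1 + c) + 1 / (1 + c) = 1 := by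
      rw [← add_div, add_comm c 1, div_self hs]
    have e2 : c⁻¹ * (c / (1 + c)) + c * (1 / (1 + c)) = 1 := by
      rw [← mul_div_assoc, inv_mul_cancel₀ h0, ← mul_div_assoc, mul_one, ← add_div, div_self hs]
    exact ⟨⟨n1, n1, n2, n2, e1, e1⟩, n1, n1, n2, n2, e2, e2⟩
end
end

section
/- Let n be an odd positive integer, ξ ∈ ℂ a primitive n-th root of unity, and 1 ≤ i < j ≤ n−1. Then the triple intersection U ∩ g^i·U ∩ g^j·U is empty, where g^k·U denotes the translate {g^k · u : u ∈ U} under componentwise multiplication. -/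
noncomputable section

/-- Let `n` be an odd positive integer, `ξ` a primitive `n`-th root
of unity, and `1 ≤ i < j ≤ n - 1`. Then the triple intersection
`U ∩ g^i·U ∩ g^j·U` is empty, where `g^k·U` denotes the translate
`{g^k · u : u ∈ U}` under componentwise multiplication by
`g^k = (ξ^k, ξ^k, ξ^{-k}, ξ^{-k})`. -/
theorem triple_intersection_empty (n : ℕ) (hpos : 0 < n) (hodd : Odd n) (ξ : ℂ)
    (hξ : IsPrimitiveRoot ξ n) (i j : ℕ) (h1 : 1 ≤ i) (hij : i < j) (h2 : j ≤ n - 1) :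
    U ∩ gTranslate (ξ ^ i) U ∩ gTranslate (ξ ^ j) U = ∅ := by
  have hn : n ≠ 0 := Nat.pos_iff_ne_zero.mp hpos
  have hξ0 : ξ ≠ 0 := hξ.ne_zero hn
  have key : ∀ a w y wa ya : ℂ, a ≠ 0 → a ≠ 1 → w + y = 1 → wa + ya = 1 →
      a * wa = w → a⁻¹ * ya = y → (a + 1) * y = 1 := by
    intro a w y wa ya ha ha1 h ha0 hw hy
    have hya : ya = a * y := by
      rw [← hy]
      field_simp
    have e : (a - 1) * ((a + 1) * y - 1) = 0 := by
      linear_combination a * ha0 - h - hw - a * hya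
    rcases mul_eq_zero.mp e with e | e
    · exact absurd (sub_eq_zero.mp e) ha1
    · exact sub_eq_zero.mp e
  ext ⟨w, x, y, z⟩
  simp only [Set.mem_inter_iff, Set.mem_empty_iff_false, iff_false]
  rintro ⟨⟨hU, ⟨⟨w1, x1, y1, z1⟩, hU1, he1⟩⟩, ⟨⟨w2, x2, y2, z2⟩, hU2, he2⟩⟩
  simp only [U, Set.mem_ofPred_eq] at hU hU1 hU2
  simp only [Prod.mk.injEq] at he1 he2
  have hi : ξ ^ i ≠ 1 := hξ.pow_ne_one_of_pos_of_lt (by omega) (by omega)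
  have hj : ξ ^ j ≠ 1 := hξ.pow_ne_one_of_pos_of_lt (by omega) (by omega)
  have k1 := key _ _ _ _ _ (pow_ne_zero i hξ0) hi hU.2.2.2.2.1 hU1.2.2.2.2.1 he1.1 he1.2.2.1
  have k2 := key _ _ _ _ _ (pow_ne_zero j hξ0) hj hU.2.2.2.2.1 hU2.2.2.2.2.1 he2.1 he2.2.2.1
  have hab : ξ ^ i = ξ ^ j := by
    have := mul_right_cancel₀ hU.2.2.1 (k1.trans k2.symm)
    exact add_right_cancel this
  have := hξ.pow_inj (by omega) (by omega) hab
  omega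
end
end

section
/- Let n be an odd positive integer, ξ ∈ ℂ a primitive n-th root of unity, and g = (ξ, ξ, ξ^{-1}, ξ^{-1}) ∈ (ℂ*)^4. Then the restriction of p_n to U ∖ ⋃_{i=1}^{n−1} (U ∩ g^i·U) is injective. -/
noncomputable section

/-- Let `n` be an odd positive integer, `ξ` a primitive `n`-th root
of unity, and `g = (ξ, ξ, ξ⁻¹, ξ⁻¹)`. Then the restriction of `p_n` to
`U ∖ ⋃_{i=1}^{n-1} (U ∩ g^i·U)` is injective. -/
theorem pmap_injOn_complement (n : ℕ) (hpos : 0 < n) (hodd : Odd n) (ξ : ℂ)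
    (hξ : IsPrimitiveRoot ξ n) :
    Set.InjOn (pmap n) (U \ ⋃ i ∈ Set.Icc 1 (n - 1), (U ∩ gTranslate (ξ ^ i) U)) := by
  rintro ⟨w, x, y, z⟩ ⟨hp, hpn⟩ ⟨wq, xq, yq, zq⟩ ⟨hq, _⟩ h
  simp only [pmap, Prod.mk.injEq] at h
  obtain ⟨h1, h2, h3, h4⟩ := h
  have hq0 := hq
  simp only [U, Set.mem_ofPred_eq] at hq0
  obtain ⟨a1, a2, -, -, -, -⟩ := hq0
  have hp0 := hp
  simp only [U, Set.mem_ofPred_eq] at hp0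
  obtain ⟨b1, b2, -, -, -, -⟩ := hp0
  have hc : (w / wq) ^ n = 1 := by
    rw [div_pow, h1, div_self (pow_ne_zero _ a1)]
  have : NeZero n := ⟨Nat.pos_iff_ne_zero.mp hpos⟩
  obtain ⟨i, hi, hci⟩ := hξ.eq_pow_of_pow_eq_one hc
  have hw : w = ξ ^ i * wq := by rw [hci]; field_simp
  have hc0 : ξ ^ i ≠ 0 := by
    rw [hci]; exact div_ne_zero b1 a1
  generalize hcc : ξ ^ i = c at *
  have hx : x = c * xq := by
    rw [div_eq_div_iff b2 a2, hw] at h2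
    apply mul_left_cancel₀ a1
    linear_combination -h2
  have hy : y = c⁻¹ * yq := by
    rw [hw] at h3
    rw [eq_inv_mul_iff_mul_eq₀ hc0]
    apply mul_left_cancel₀ a1
    linear_combination h3
  have hz : z = c⁻¹ * zq := by
    rw [hw] at h4
    rw [eq_inv_mul_iff_mul_eq₀ hc0]
    apply mul_left_cancel₀ a1
    linear_combination h4
  by_cases hi0 : i = 0
  · have hc1 : c = 1 := by rw [← hcc, hi0, pow_zero]
    rw [hw, hx, hy, hz, hc1]
    simp
  · exfalso
    apply hpn
    simp only [Set.mem_iUnion]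
    refine ⟨i, ⟨by omega, by omega⟩, hp, ?_⟩
    refine ⟨(wq, xq, yq, zq), hq, ?_⟩
    rw [hw, hx, hy, hz, hcc]
end
end

section
/- Let n be an odd positive integer, ξ ∈ ℂ a primitive n-th root of unity, and 1 ≤ i ≤ n−1. Then the fiber of p_n over p_n(P_i) intersected with U consists of exactly the two points P_i and P_{n−i}; that is, {u ∈ U : p_n(u) = p_n(P_i)} = {P_i, P_{n−i}}, and P_i ≠ P_{n−i}. -/
noncomputable section

/-- Let `n` be an odd positive integer, `ξ` a primitive `n`-th root
of unity, and `1 ≤ i ≤ n - 1`. Then the fiber of `p_n` over `p_n(P_i)`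
intersected with `U` consists of exactly the two points `P_i` and `P_{n-i}`:
`{u ∈ U : p_n(u) = p_n(P_i)} = {P_i, P_{n-i}}`, and `P_i ≠ P_{n-i}`. -/
theorem fiber_eq_pair (n : ℕ) (hpos : 0 < n) (hodd : Odd n) (ξ : ℂ)
    (hξ : IsPrimitiveRoot ξ n) (i : ℕ) (h1 : 1 ≤ i) (h2 : i ≤ n - 1) :
    {u ∈ U | pmap n u = pmap n (P ξ i)} = {P ξ i, P ξ (n - i)} ∧
    P ξ i ≠ P ξ (n - i) := by
  obtain ⟨a, ha⟩ : ∃ a, a = ξ ^ i := ⟨_, rfl⟩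
  have hin : i < n := by omega
  have han : a ^ n = 1 := by rw [ha, ← pow_mul, mul_comm, pow_mul, hξ.pow_eq_one, one_pow]
  have ha1 : a ≠ 1 := by rw [ha]; exact hξ.pow_ne_one_of_pos_of_lt (by omega) hin
  have ha0 : a ≠ 0 := by
    rintro h
    rw [h, zero_pow hpos.ne'] at han
    exact zero_ne_one han
  have hs : 1 + a ≠ 0 := by
    intro h
    have h' : a = -1 := by linear_combination h
    rw [h', hodd.neg_one_pow] at han
    norm_num at han
  have hinv : ξ ^ (n - i) = a⁻¹ := by
    apply eq_inv_of_mul_eq_one_left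
    rw [ha, ← pow_add, Nat.sub_add_cancel hin.le, hξ.pow_eq_one]
  obtain ⟨b, hb⟩ : ∃ b, b = a / (1 + a) := ⟨_, rfl⟩
  obtain ⟨c, hc⟩ : ∃ c, c = 1 / (1 + a) := ⟨_, rfl⟩
  have hs' : 1 + a⁻¹ ≠ 0 := by
    intro h
    apply hs
    field_simp at h
    linear_combination h
  have e1 : a⁻¹ / (1 + a⁻¹) = c := by
    rw [hc, div_eq_div_iff hs' hs, mul_add, inv_mul_cancel₀ ha0]; ring
  have e2 : 1 / (1 + a⁻¹) = b := by
    rw [hb, div_eq_div_iff hs' hs, mul_add a, mul_inv_cancel₀ ha0]; ring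
  have P1 : P ξ i = (b, b, c, c) := by
    simp only [P, ← ha, ← hb, ← hc]
  have P2 : P ξ (n - i) = (c, c, b, b) := by
    simp only [P, hinv, e1, e2]
  have hb0 : b ≠ 0 := by rw [hb]; exact div_ne_zero ha0 hs
  have hc0 : c ≠ 0 := by rw [hc]; exact div_ne_zero one_ne_zero hs
  have hbc : b + c = 1 := by rw [hb, hc]; field_simp; ring
  have hbac : b = a * c := by rw [hb, hc]; ring
  have hne : b ≠ c := by
    intro h
    apply ha1
    apply mul_right_cancel₀ hc0
    rw [← hbac, h, one_mul]
  have hpow : b ^ n = c ^ n := by rw [hbac, mul_pow, han, one_mul]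
  rw [P1, P2]
  refine ⟨?_, fun h => hne (congrArg Prod.fst h)⟩
  ext ⟨w, x, y, z⟩
  simp only [U, pmap, Set.mem_ofPred_eq, Set.mem_insert_iff, Set.mem_singleton_iff, Prod.mk.injEq]
  constructor
  · rintro ⟨⟨hw, hx, hy, hz, hwy, hxz⟩, -, hwx, hwy', -⟩
    rw [div_self hb0, div_eq_one_iff_eq hx] at hwx
    have hprod : (w - b) * (w - c) = 0 := by
      linear_combination w * hwy - hwy' - w * hbc
    rcases mul_eq_zero.mp hprod with h | h
    · left
      have h : w = b := sub_eq_zero.mp h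
      refine ⟨h, hwx ▸ h, ?_, ?_⟩
      · linear_combination hwy - h - hbc
      · linear_combination hxz - h + hwx - hbc
    · right
      have h : w = c := sub_eq_zero.mp h
      refine ⟨h, hwx ▸ h, ?_, ?_⟩
      · linear_combination hwy - h - hbc
      · linear_combination hxz - h + hwx - hbc
  · rintro (⟨rfl, rfl, rfl, rfl⟩ | ⟨rfl, rfl, rfl, rfl⟩)
    · exact ⟨⟨hb0, hb0, hc0, hc0, hbc, hbc⟩, rfl, rfl, rfl, rfl⟩
    · exact ⟨⟨hc0, hc0, hb0, hb0, by rw [add_comm, hbc], by rw [add_comm, hbc]⟩, hpow.symm,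
        by rw [div_self hb0, div_self hc0], mul_comm _ _, mul_comm _ _⟩
end
end

section
/- Let n be an odd positive integer and ξ ∈ ℂ a primitive n-th root of unity. Then the set of points of U_n = p_n(U) having at least two preimages in U under p_n is exactly {p_n(P_i) : 1 ≤ i ≤ (n−1)/2}, and this set has exactly (n−1)/2 elements; that is, the set {v ∈ U_n : the fiber p_n^{-1}(v) ∩ U has at least two elements} has cardinality (n−1)/2. -/
noncomputable section

lemma aux_ne (n : ℕ) (hodd : Odd n) (t : ℂ) (ht : t ^ n = 1) : 1 + t ≠ 0 := by
  intro h
  have h1 : t = -1 := by linear_combination h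
  rw [h1, hodd.neg_one_pow] at ht
  norm_num at ht

lemma aux_pair (n : ℕ) (hodd : Odd n) (t : ℂ) (ht : t ^ n = 1) (ht1 : t ≠ 1) :
    ((t / (1 + t), t / (1 + t), 1 / (1 + t), 1 / (1 + t)) : ℂ × ℂ × ℂ × ℂ) ∈ U ∧
    ((1 / (1 + t), 1 / (1 + t), t / (1 + t), t / (1 + t)) : ℂ × ℂ × ℂ × ℂ) ∈ U ∧
    pmap n (t / (1 + t), t / (1 + t), 1 / (1 + t), 1 / (1 + t)) =
      pmap n (1 / (1 + t), 1 / (1 + t), t / (1 + t), t / (1 + t)) ∧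
    ((t / (1 + t), t / (1 + t), 1 / (1 + t), 1 / (1 + t)) : ℂ × ℂ × ℂ × ℂ) ≠
      (1 / (1 + t), 1 / (1 + t), t / (1 + t), t / (1 + t)) := by
  have h1 := aux_ne n hodd t ht
  have h0 : t ≠ 0 := by
    rintro rfl
    rw [zero_pow hodd.pos.ne'] at ht
    norm_num at ht
  have ha : t / (1 + t) ≠ 0 := div_ne_zero h0 h1
  have hb : 1 / (1 + t) ≠ 0 := div_ne_zero one_ne_zero h1
  have hs : t / (1 + t) + 1 / (1 + t) = 1 := by field_simp; ring
  have hs' : 1 / (1 + t) + t / (1 + t) = 1 := by field_simp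
  refine ⟨⟨ha, ha, hb, hb, hs, hs⟩, ⟨hb, hb, ha, ha, hs', hs'⟩, ?_, ?_⟩
  · simp only [pmap, Prod.mk.injEq]
    refine ⟨?_, ?_, mul_comm _ _, mul_comm _ _⟩
    · rw [div_pow, div_pow, ht, one_pow]
    · rw [div_self ha, div_self hb]
  · intro h
    have h2 := congrArg Prod.fst h
    simp only at h2
    field_simp at h2
    exact ht1 h2

lemma aux_double (n : ℕ) (hodd : Odd n) (u u' : ℂ × ℂ × ℂ × ℂ) (hu : u ∈ U) (hu' : u' ∈ U)
    (h : pmap n u = pmap n u') (hne : u ≠ u') :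
    ∃ c : ℂ, c ^ n = 1 ∧ c ≠ 1 ∧ u' = (c / (1 + c), c / (1 + c), 1 / (1 + c), 1 / (1 + c)) := by
  obtain ⟨w, x, y, z⟩ := u
  obtain ⟨w', x', y', z'⟩ := u'
  obtain ⟨hw, hx, hy, hz, h1, h2⟩ := hu
  obtain ⟨hw', hx', hy', hz', h1', h2'⟩ := hu'
  simp only [pmap, Prod.mk.injEq] at *
  obtain ⟨e1, e2, e3, e4⟩ := h
  obtain rfl : y = 1 - w := by linear_combination h1
  obtain rfl : z = 1 - x := by linear_combination h2
  obtain rfl : y' = 1 - w' := by linear_combination h1'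
  obtain rfl : z' = 1 - x' := by linear_combination h2'
  obtain ⟨c, rfl⟩ : ∃ c, w' = c * w := ⟨w' / w, by field_simp⟩
  have hc0 : c ≠ 0 := left_ne_zero_of_mul hw'
  have hxx : x' = c * x := by
    field_simp at e2
    linear_combination e2
  subst hxx
  have hc1 : c ≠ 1 := by
    rintro rfl
    apply hne
    simp
  have hc1' : c - 1 ≠ 0 := sub_ne_zero.mpr hc1
  have hcn : c ^ n = 1 := by
    rw [mul_pow] at e1
    have : w ^ n ≠ 0 := pow_ne_zero _ hw
    apply mul_right_cancel₀ this
    rw [← e1, one_mul]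
  have hc := aux_ne n hodd c hcn
  have hw1 : w * (1 + c) = 1 := by
    apply mul_left_cancel₀ (mul_ne_zero hw hc1')
    linear_combination e3
  have hx1 : x * (1 + c) = 1 := by
    apply mul_left_cancel₀ (mul_ne_zero hw hc1')
    linear_combination e4
  have hw2 : w = 1 / (1 + c) := by rw [eq_div_iff hc, hw1]
  have hx2 : x = 1 / (1 + c) := by rw [eq_div_iff hc, hx1]
  refine ⟨c, hcn, hc1, ?_⟩
  subst hw2
  subst hx2
  refine ⟨?_, ?_, ?_, ?_⟩ <;> field_simp <;> ring

lemma aux_inj (n : ℕ) (hodd : Odd n) (ξ : ℂ) (hξ : IsPrimitiveRoot ξ n) :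
    Set.InjOn (fun i => pmap n (P ξ i)) (Set.Icc 1 ((n - 1) / 2)) := by
  intro i hi j hj h
  obtain ⟨hi1, hi2⟩ := hi
  obtain ⟨hj1, hj2⟩ := hj
  have hpow : ∀ k, (ξ ^ k) ^ n = 1 := fun k => by
    rw [← pow_mul, mul_comm, pow_mul, hξ.pow_eq_one, one_pow]
  have hi0 := aux_ne n hodd _ (hpow i)
  have hj0 := aux_ne n hodd _ (hpow j)
  simp only [pmap, P, Prod.mk.injEq] at h
  have h3 := h.2.2.1
  have h4 : (ξ ^ i - ξ ^ j) * (1 - ξ ^ (i + j)) = 0 := by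
    rw [pow_add]
    generalize ξ ^ i = s at *
    generalize ξ ^ j = t at *
    rw [div_mul_div_comm, div_mul_div_comm,
      div_eq_div_iff (mul_ne_zero hi0 hi0) (mul_ne_zero hj0 hj0)] at h3
    linear_combination h3
  rcases mul_eq_zero.mp h4 with h5 | h5
  · exact hξ.pow_inj (by omega) (by omega) (sub_eq_zero.mp h5)
  · exfalso
    exact hξ.pow_ne_one_of_pos_of_lt (by omega : i + j ≠ 0) (by omega) (sub_eq_zero.mp h5).symm

/-- Let `n` be an odd positive integer and `ξ` a primitive `n`-th
root of unity. Then the set of points of `U_n = p_n(U)` having at least two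
preimages in `U` under `p_n` is exactly `{p_n(P_i) : 1 ≤ i ≤ (n-1)/2}`, and this
set has exactly `(n-1)/2` elements. -/
theorem multiple_point_set (n : ℕ) (hpos : 0 < n) (hodd : Odd n) (ξ : ℂ)
    (hξ : IsPrimitiveRoot ξ n) :
    {v ∈ pmap n '' U | {u ∈ U | pmap n u = v}.Nontrivial} =
      (fun i => pmap n (P ξ i)) '' Set.Icc 1 ((n - 1) / 2) ∧
    {v ∈ pmap n '' U | {u ∈ U | pmap n u = v}.Nontrivial}.ncard = (n - 1) / 2 := by
  have hpow : ∀ k, (ξ ^ k) ^ n = 1 := fun k => by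
    rw [← pow_mul, mul_comm, pow_mul, hξ.pow_eq_one, one_pow]
  have key : {v ∈ pmap n '' U | {u ∈ U | pmap n u = v}.Nontrivial} =
      (fun i => pmap n (P ξ i)) '' Set.Icc 1 ((n - 1) / 2) := by
    ext v
    constructor
    · rintro ⟨-, u, ⟨hu, huv⟩, u', ⟨hu', huv'⟩, hne⟩
      obtain ⟨c, hcn, hc1, hc⟩ := aux_double n hodd u u' hu hu' (huv.trans huv'.symm) hne
      haveI : NeZero n := ⟨hpos.ne'⟩
      obtain ⟨k, hk, rfl⟩ := hξ.eq_pow_of_pow_eq_one hcn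
      have hk0 : k ≠ 0 := by
        rintro rfl
        simp at hc1
      by_cases hk2 : k ≤ (n - 1) / 2
      · refine ⟨k, ⟨by omega, hk2⟩, ?_⟩
        change pmap n (P ξ k) = v
        rw [← huv', hc, P]
      · obtain ⟨m, hm⟩ := hodd
        refine ⟨n - k, ⟨by omega, by omega⟩, ?_⟩
        change pmap n (P ξ (n - k)) = v
        have hodd : Odd n := ⟨m, hm⟩
        have h0 := aux_ne n hodd _ hcn
        have h0' := aux_ne n hodd _ (hpow (n - k))
        have hmul : ξ ^ (n - k) * ξ ^ k = 1 := by
          rw [← pow_add, Nat.sub_add_cancel hk.le, hξ.pow_eq_one]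
        rw [← huv', hc, (aux_pair n hodd _ hcn hc1).2.2.1, P]
        have e1 : ξ ^ (n - k) / (1 + ξ ^ (n - k)) = 1 / (1 + ξ ^ k) := by
          rw [div_eq_div_iff h0' h0]
          linear_combination hmul
        have e2 : 1 / (1 + ξ ^ (n - k)) = ξ ^ k / (1 + ξ ^ k) := by
          rw [div_eq_div_iff h0' h0]
          linear_combination -hmul
        rw [e1, e2]
    · rintro ⟨i, ⟨hi1, hi2⟩, rfl⟩
      have hi : ξ ^ i ≠ 1 := hξ.pow_ne_one_of_pos_of_lt (by omega) (by omega)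
      obtain ⟨h1, h2, h3, h4⟩ := aux_pair n hodd _ (hpow i) hi
      exact ⟨⟨_, h1, rfl⟩, _, ⟨h1, rfl⟩, _, ⟨h2, h3.symm⟩, h4⟩
  refine ⟨key, ?_⟩
  rw [key, (aux_inj n hodd ξ hξ).ncard_image, ← Finset.coe_Icc, Set.ncard_coe_finset]
  simp
end
end

section
/- Let n be an odd positive integer, ξ ∈ ℂ a primitive n-th root of unity, and 1 ≤ i ≤ n−1. Then for every j with 1 ≤ j ≤ n−1 and j ≠ i, the point P_i of the intersection U ∩ g^i·U does not lie in the translate g^j·U; that is, the intersection point U ∩ g^i·U is not contained in any other translate g^j·U. -/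
noncomputable section

/-- Let `n` be an odd positive integer, `ξ` a primitive `n`-th root
of unity, and `1 ≤ i ≤ n - 1`. Then for every `j` with `1 ≤ j ≤ n - 1` and
`j ≠ i`, the point `P_i` of the intersection `U ∩ g^i·U` does not lie in the
translate `g^j·U`. -/
theorem point_not_in_other_translate (n : ℕ) (hpos : 0 < n) (hodd : Odd n) (ξ : ℂ)
    (hξ : IsPrimitiveRoot ξ n) (i : ℕ) (h1 : 1 ≤ i) (h2 : i ≤ n - 1)
    (j : ℕ) (hj1 : 1 ≤ j) (hj2 : j ≤ n - 1) (hji : j ≠ i) :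
    P ξ i ∉ gTranslate (ξ ^ j) U := by
  rintro ⟨⟨w, x, y, z⟩, ⟨hw, hx, hy, hz, e1, e2⟩, he⟩
  simp only [P, Prod.mk.injEq] at he hw hy e1
  obtain ⟨a1, -, a3, -⟩ := he
  have hξ0 : ξ ≠ 0 := hξ.ne_zero hpos.ne'
  have hb0 : ξ ^ j ≠ 0 := pow_ne_zero _ hξ0
  have hb1 : ξ ^ j ≠ 1 := hξ.pow_ne_one_of_pos_of_lt (by omega) (by omega)
  have hba : ξ ^ j ≠ ξ ^ i := fun h => hji (hξ.pow_inj (by omega) (by omega) h)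
  generalize ξ ^ j = b at *
  generalize ξ ^ i = a at *
  have ha : 1 + a ≠ 0 := by
    intro h
    rw [h, div_zero] at a3
    exact mul_ne_zero (inv_ne_zero hb0) hy a3
  have k1 : b * w * (1 + a) = a := by
    rw [a1]; field_simp
  have k3 : y * (1 + a) = b := by
    have : y = b * (b⁻¹ * y) := by field_simp
    rw [this, a3]; field_simp
  have : (b - 1) * (b - a) = 0 := by
    linear_combination b * (1 + a) * e1 - k1 - b * k3
  rcases mul_eq_zero.mp this with h | h
  · exact hb1 (sub_eq_zero.mp h)
  · exact hba (sub_eq_zero.mp h)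
end
end

section
/- Let n be an odd positive integer, ξ ∈ ℂ a primitive n-th root of unity, and g = (ξ, ξ, ξ^{-1}, ξ^{-1}) ∈ (ℂ*)^4. Then for every v ∈ U, the fiber of p_n through v intersected with U, namely {u ∈ U : p_n(u) = p_n(v)}, has either exactly one or exactly two elements, and it has two elements if and only if v = P_i for some 1 ≤ i ≤ n−1. -/
noncomputable section

/-- Let `n` be an odd positive integer and `ξ` a primitive `n`-th
root of unity. Then for every `v ∈ U`, the fiber of `p_n` through `v`
intersected with `U`, namely `{u ∈ U : p_n(u) = p_n(v)}`, has either exactly one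
or exactly two elements, and it has two elements if and only if `v = P_i` for
some `1 ≤ i ≤ n - 1`. -/
theorem fiber_card_one_or_two (n : ℕ) (hpos : 0 < n) (hodd : Odd n) (ξ : ℂ)
    (hξ : IsPrimitiveRoot ξ n) (v : ℂ × ℂ × ℂ × ℂ) (hv : v ∈ U) :
    ({u ∈ U | pmap n u = pmap n v}.ncard = 1 ∨
      {u ∈ U | pmap n u = pmap n v}.ncard = 2) ∧
    ({u ∈ U | pmap n u = pmap n v}.ncard = 2 ↔
      ∃ i : ℕ, 1 ≤ i ∧ i ≤ n - 1 ∧ v = P ξ i) := by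
  obtain ⟨w, x, y, z⟩ := v
  obtain ⟨hw, hx, hy, hz, hwy, hxz⟩ := hv
  dsimp only at hw hx hy hz hwy hxz
  have hyw : y = 1 - w := by linear_combination hwy
  have hzx : z = 1 - x := by linear_combination hxz
  have key : ∀ u : ℂ × ℂ × ℂ × ℂ, u ∈ U → pmap n u = pmap n (w, x, y, z) →
      u = (w, x, y, z) ∨ (u = (y, y, w, w) ∧ x = w ∧ y ^ n = w ^ n ∧ w ≠ y) := by
    rintro ⟨a, b, c, d⟩ ⟨ha, hb, hc, hd, hac, hbd⟩ h
    simp only [pmap, Prod.mk.injEq] at h ha hb hc hd hac hbd ⊢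
    obtain ⟨h1, h2, h3, h4⟩ := h
    have hca : c = 1 - a := by linear_combination hac
    have hdb : d = 1 - b := by linear_combination hbd
    rw [div_eq_div_iff hb hx] at h2
    subst hyw hzx hca hdb
    by_cases e : a = w
    · subst e
      have : b = x := by
        apply mul_left_cancel₀ ha
        linear_combination -h2
      subst this
      simp
    · right
      have e' : a - w ≠ 0 := sub_ne_zero.mpr e
      have ea : a = 1 - w := by
        apply mul_left_cancel₀ e'
        linear_combination -h3
      have ex : x = w := by
        apply mul_left_cancel₀ e'
        subst ea
        linear_combination (-w) * h4 + (1 - w) * h2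
      have eb : b = a := by
        apply mul_left_cancel₀ hw
        rw [ex] at h2
        linear_combination -h2
      subst ea
      subst eb
      refine ⟨⟨rfl, rfl, by ring, by ring⟩, ex, h1, fun h => e h.symm⟩
  have hA : (x = w ∧ y ^ n = w ^ n ∧ w ≠ y) ↔
      ∃ i : ℕ, 1 ≤ i ∧ i ≤ n - 1 ∧ (w, x, y, z) = P ξ i := by
    constructor
    · rintro ⟨h1, h2, h3⟩
      have hr : (w / y) ^ n = 1 := by
        rw [div_pow, h2, div_self (pow_ne_zero _ hw)]
      have : NeZero n := ⟨hpos.ne'⟩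
      obtain ⟨i, hi, hi'⟩ := hξ.eq_pow_of_pow_eq_one hr
      have hi0 : i ≠ 0 := by
        rintro rfl
        rw [pow_zero, eq_comm, div_eq_one_iff_eq hy] at hi'
        exact h3 hi'
      refine ⟨i, by omega, by omega, ?_⟩
      have hs : 1 + w / y = 1 / y := by
        field_simp
        linear_combination hwy
      have hzy : z = y := by rw [hzx, hyw, h1]
      simp only [P, hi', hs, h1, hzy, Prod.mk.injEq]
      field_simp
      simp
    · rintro ⟨i, hi1, hi2, h⟩
      simp only [P, Prod.mk.injEq] at h
      obtain ⟨h1, h2, h3, h4⟩ := h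
      have hne : 1 + ξ ^ i ≠ 0 := by
        intro h0
        rw [h0] at h3
        simp at h3
        exact hy h3
      refine ⟨by rw [h1, h2], ?_, ?_⟩
      · rw [h1, h3, div_pow, div_pow, ← pow_mul, mul_comm, pow_mul, hξ.pow_eq_one, one_pow,
          one_pow]
      · intro h
        rw [h1, h3, div_left_inj' hne] at h
        exact hξ.pow_ne_one_of_pos_of_lt (by omega) (by omega) h
  rw [← hA]
  by_cases A : x = w ∧ y ^ n = w ^ n ∧ w ≠ y
  · have hS : {u ∈ U | pmap n u = pmap n (w, x, y, z)} = {(w, x, y, z), (y, y, w, w)} := by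
      ext u
      simp only [Set.mem_setOf_eq, Set.mem_insert_iff, Set.mem_singleton_iff]
      constructor
      · rintro ⟨h1, h2⟩
        rcases key u h1 h2 with h | h
        · exact Or.inl h
        · exact Or.inr h.1
      · rintro (rfl | rfl)
        · exact ⟨⟨hw, hx, hy, hz, hwy, hxz⟩, rfl⟩
        · obtain ⟨h1, h2, h3⟩ := A
          have hzy : z = y := by rw [hzx, hyw, h1]
          refine ⟨⟨hy, hy, hw, hw, by linear_combination hwy, by linear_combination hwy⟩, ?_⟩
          simp only [pmap, Prod.mk.injEq, h1, h2, hzy]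
          refine ⟨trivial, ?_, mul_comm _ _, mul_comm _ _⟩
          rw [div_self hy, div_self hw]
    have h2 : {u ∈ U | pmap n u = pmap n (w, x, y, z)}.ncard = 2 := by
      rw [hS]
      apply Set.ncard_pair
      intro h
      exact A.2.2 (congrArg Prod.fst h)
    exact ⟨Or.inr h2, fun _ => A, fun _ => h2⟩
  · have hS : {u ∈ U | pmap n u = pmap n (w, x, y, z)} = {(w, x, y, z)} := by
      ext u
      simp only [Set.mem_setOf_eq, Set.mem_singleton_iff]
      constructor
      · rintro ⟨h1, h2⟩
        rcases key u h1 h2 with h | h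
        · exact h
        · exact absurd h.2 A
      · rintro rfl
        exact ⟨⟨hw, hx, hy, hz, hwy, hxz⟩, rfl⟩
    have h1 : {u ∈ U | pmap n u = pmap n (w, x, y, z)}.ncard = 1 := by
      rw [hS]
      exact Set.ncard_singleton _
    refine ⟨Or.inl h1, fun h => ?_, fun h => absurd h A⟩
    omega
end
end
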